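/- On the Weierstrass curve W : y² + (t²+1)xy + t²y = x³ + t²x² over the rational function field F = 𝔽₂(t), the point (t, t) is a nonsingular point of order exactly 10 in the group of points of W. -/

import Mathlib

/-- The rational function field `F = 𝔽₂(t)`. -/
noncomputable abbrev F : Type := RatFunc (ZMod 2)

/-- The variable `t` of `𝔽₂(t)`. -/
noncomputable def t : F := RatFunc.X

/-- The Weierstrass curve `W : y² + (t²+1)xy + t²y = x³ + t²x²` over `𝔽₂(t)`. -/
noncomputable def W : WeierstrassCurve.Affine F :=
  { a₁ := t ^ 2 + 1, a₂ := t ^ 2, a₃ := t ^ 2, a₄ := 0, a₆ := 0 }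

/-!
Over any field of characteristic two, successive doublings of `P = (s, s)` on
`y² + (s² + 1)xy + s²y = x³ + s²x²` give `2P = (0, s²)`, `4P = (s², 0)` and `8P = (0, 0) = -2P`,
the tangent slopes being `1`, `s² + 1` and `1`. Hence `10P = 0`. Since `2P` is affine and
`4P`, `P` have different `x`-coordinates `s²`, `s`, neither `2P` nor `5P = 4P + P` vanishes. The
denominators of the slopes are `s(s² + s + 1)`, `s²` and `s⁴`, and
`s⁴ - s = s(s + 1)(s² + s + 1)`, so all of this works as soon as `s ∉ 𝔽₄`.
-/

open WeierstrassCurve.Affine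

theorem addOrderOf_eq_prime_mul_prime {A : Type*} [AddMonoid A] {a : A} {p q : ℕ}
    (hp : p.Prime) (hq : q.Prime) (hpq : (p * q) • a = 0) (hpa : p • a ≠ 0) (hqa : q • a ≠ 0) :
    addOrderOf a = p * q := by
  refine addOrderOf_eq_of_nsmul_and_div_prime_nsmul (Nat.mul_pos hp.pos hq.pos) hpq
    fun r hr hdvd ↦ ?_
  rcases hr.dvd_mul.mp hdvd with hrp | hrq
  · obtain rfl := (Nat.prime_dvd_prime_iff_eq hr hp).mp hrp
    rwa [Nat.mul_div_cancel_left q hp.pos]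
  · obtain rfl := (Nat.prime_dvd_prime_iff_eq hr hq).mp hrq
    rwa [Nat.mul_div_cancel p hq.pos]

theorem ratFunc_X_pow_ne_X {k : Type*} [Field k] {n : ℕ} (hn : n ≠ 1) :
    (RatFunc.X : RatFunc k) ^ n ≠ RatFunc.X := by
  rw [← RatFunc.algebraMap_X, ← map_pow, (RatFunc.algebraMap_injective k).ne_iff]
  intro hX
  simpa [hn] using congrArg Polynomial.natDegree hX

theorem two_nsmul_some_eq_some {K : Type*} [Field K] [DecidableEq K]
    {E : WeierstrassCurve.Affine K} {x y x' y' : K} {h : E.Nonsingular x y}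
    {h' : E.Nonsingular x' y'} (slope : K) (hy : y ≠ E.negY x y)
    (hslope : 3 * x ^ 2 + 2 * E.a₂ * x + E.a₄ - E.a₁ * y = slope * (y - E.negY x y))
    (hx' : x' = E.addX x x slope) (hy' : y' = E.addY x x y slope) :
    2 • Point.some x y h = Point.some x' y' h' := by
  have slope_eq : E.slope x x y y = slope := by
    rw [slope_of_Y_ne rfl hy, hslope, mul_div_cancel_right₀ _ (sub_ne_zero.mpr hy)]
  subst hx' hy' slope_eq
  rw [two_nsmul, Point.add_self_of_Y_ne hy]

theorem nonsingular_of_ne_negY {R : Type*} [CommRing R] {E : WeierstrassCurve.Affine R} {x y : R}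
    (h : E.Equation x y) (hy : y ≠ E.negY x y) : E.Nonsingular x y :=
  (E.nonsingular_iff x y).mpr ⟨h, .inr hy⟩

/-- The curve `y² + (s² + 1)xy + s²y = x³ + s²x²`, the specialization of `W` at `t = s` to an
arbitrary parameter `s`; it carries the point `(s, s)` in characteristic two. -/
def curveAt {R : Type*} [CommRing R] (s : R) : WeierstrassCurve.Affine R :=
  { a₁ := s ^ 2 + 1, a₂ := s ^ 2, a₃ := s ^ 2, a₄ := 0, a₆ := 0 }

namespace curveAt

section Equation

variable {R : Type*} [CommRing R] [CharP R 2] (s : R)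

theorem equation_self_self : (curveAt s).Equation s s := by
  rw [equation_iff]
  simp only [curveAt]
  grind

theorem equation_zero_sq : (curveAt s).Equation 0 (s ^ 2) := by
  rw [equation_iff]
  simp only [curveAt]
  grind

theorem equation_sq_zero : (curveAt s).Equation (s ^ 2) 0 := by
  rw [equation_iff]
  simp only [curveAt]
  grind

end Equation

variable {K : Type*} [Field K] [CharP K 2] {s : K}

theorem self_ne_negY_self (hs : s ^ 4 ≠ s) : s ≠ (curveAt s).negY s s := by
  have factorization : s ^ 4 - s = (s + 1) * (s - (curveAt s).negY s s) := by
    simp only [curveAt, negY]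
    grind
  intro h
  exact hs (sub_eq_zero.mp (by rw [factorization, sub_eq_zero.mpr h, mul_zero]))

theorem sq_ne_negY_zero (hs : s ≠ 0) : s ^ 2 ≠ (curveAt s).negY 0 (s ^ 2) := by
  have negY_eq : (curveAt s).negY 0 (s ^ 2) = 0 := by
    simp only [curveAt, negY]
    grind
  rw [negY_eq]
  exact pow_ne_zero 2 hs

theorem zero_ne_negY_sq (hs : s ≠ 0) : 0 ≠ (curveAt s).negY (s ^ 2) 0 := by
  have negY_eq : (curveAt s).negY (s ^ 2) 0 = s ^ 4 := by
    simp only [curveAt, negY]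
    grind
  rw [negY_eq]
  exact (pow_ne_zero 4 hs).symm

variable [DecidableEq K]

theorem two_nsmul_self_self (hs : s ^ 4 ≠ s) {h : (curveAt s).Nonsingular s s}
    {h' : (curveAt s).Nonsingular 0 (s ^ 2)} :
    2 • Point.some s s h = Point.some 0 (s ^ 2) h' := by
  apply two_nsmul_some_eq_some 1 (self_ne_negY_self hs) <;>
    simp only [curveAt, addY, negAddY, addX, negY] <;> grind

theorem two_nsmul_zero_sq (hs : s ≠ 0) {h : (curveAt s).Nonsingular 0 (s ^ 2)}
    {h' : (curveAt s).Nonsingular (s ^ 2) 0} :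
    2 • Point.some 0 (s ^ 2) h = Point.some (s ^ 2) 0 h' := by
  apply two_nsmul_some_eq_some (s ^ 2 + 1) (sq_ne_negY_zero hs) <;>
    simp only [curveAt, addY, negAddY, addX, negY] <;> grind

theorem two_nsmul_sq_zero (hs : s ≠ 0) {h : (curveAt s).Nonsingular (s ^ 2) 0}
    {h' : (curveAt s).Nonsingular 0 (s ^ 2)} :
    2 • Point.some (s ^ 2) 0 h = -Point.some 0 (s ^ 2) h' := by
  rw [Point.neg_some]
  apply two_nsmul_some_eq_some 1 (zero_ne_negY_sq hs) <;>
    simp only [curveAt, addY, negAddY, addX, negY] <;> grind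

end curveAt

open curveAt in
theorem point_t_t_has_order_ten_general {K : Type*} [Field K] [CharP K 2] [DecidableEq K] {s : K}
    (hs : s ^ 4 ≠ s) :
    ∃ h : (curveAt s).Nonsingular s s, addOrderOf (Point.some s s h) = 10 := by
  have s_ne_zero : s ≠ 0 := by rintro rfl; simp at hs
  have sq_ne_self : s ^ 2 ≠ s := fun h ↦ hs (by rw [pow_mul s 2 2, h, h])
  have nonsingular := nonsingular_of_ne_negY (equation_self_self s) (self_ne_negY_self hs)
  have nonsingular₂ := nonsingular_of_ne_negY (equation_zero_sq s) (sq_ne_negY_zero s_ne_zero)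
  have nonsingular₄ := nonsingular_of_ne_negY (equation_sq_zero s) (zero_ne_negY_sq s_ne_zero)
  refine ⟨nonsingular, ?_⟩
  set P := Point.some s s nonsingular with P_def
  have two_nsmul_P : 2 • P = Point.some 0 (s ^ 2) nonsingular₂ := two_nsmul_self_self hs
  have four_nsmul_P : 4 • P = Point.some (s ^ 2) 0 nonsingular₄ := by
    rw [mul_nsmul P 2 2, two_nsmul_P, two_nsmul_zero_sq s_ne_zero]
  have eight_nsmul_P : 8 • P = -Point.some 0 (s ^ 2) nonsingular₂ := by
    rw [mul_nsmul P 4 2, four_nsmul_P, two_nsmul_sq_zero s_ne_zero]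
  refine addOrderOf_eq_prime_mul_prime Nat.prime_two Nat.prime_five ?_ ?_ ?_
  · rw [add_nsmul P 8 2, eight_nsmul_P, two_nsmul_P, neg_add_cancel]
  · exact two_nsmul_P ▸ Point.some_ne_zero nonsingular₂
  · intro five_nsmul_P
    rw [succ_nsmul, four_nsmul_P, add_eq_zero_iff_eq_neg, P_def, Point.neg_some,
      Point.some.injEq] at five_nsmul_P
    exact sq_ne_self five_nsmul_P.1

open scoped Classical in
/-- On `W : y² + (t²+1)xy + t²y = x³ + t²x²` over `𝔽₂(t)`, the point `(t, t)` is a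
nonsingular point of order exactly 10 in the group of points of `W`. -/
theorem point_t_t_has_order_ten :
    ∃ h : W.Nonsingular t t, addOrderOf (WeierstrassCurve.Affine.Point.some t t h) = 10 := by
  have : CharP F 2 := charP_of_injective_algebraMap (algebraMap (ZMod 2) F).injective 2
  exact point_t_t_has_order_ten_general (s := t) (ratFunc_X_pow_ne_X (by norm_num))
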